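/- Let L be a field, σ a field automorphism of L of finite order n, and K = L^σ the subfield of elements fixed by σ. If e_1, ..., e_ν ∈ L (with 1 ≤ ν ≤ n) are linearly independent over K, then the ν×ν matrix whose (i,j) entry is σ^i(e_j) (for 0 ≤ i ≤ ν−1 and 1 ≤ j ≤ ν) has nonzero determinant. -/

import Mathlib

noncomputable section

/-- The subfield of elements fixed by a ring automorphism `σ`. -/
def RingEquiv.fixedSubfield {K : Type*} [Field K] (σ : K ≃+* K) : Subfield K where
  carrier := {a | σ a = a}
  mul_mem' := by intro a b ha hb; simp only [Set.mem_setOf_eq, map_mul] at *; rw [ha, hb]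
  one_mem' := by simp
  add_mem' := by intro a b ha hb; simp only [Set.mem_setOf_eq, map_add] at *; rw [ha, hb]
  zero_mem' := by simp
  neg_mem' := by intro a ha; simp only [Set.mem_setOf_eq, map_neg] at *; rw [ha]
  inv_mem' := by intro a ha; simp only [Set.mem_setOf_eq, map_inv₀] at *; rw [ha]

theorem sigma_relation_trivial {L : Type*} [Field L] (σ : L ≃+* L) (ν : ℕ) :
    ∀ (e : Fin ν → L), LinearIndependent (σ.fixedSubfield) e →
    ∀ c : Fin ν → L, (∀ i : ℕ, i < ν → ∑ j, c j * (σ ^ i) (e j) = 0) → c = 0 := by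
  induction ν with
  | zero => intro e _ c _; exact Subsingleton.elim _ _
  | succ ν ih =>
    intro e he c hc
    have he' : LinearIndependent (σ.fixedSubfield) (fun j : Fin ν => e j.castSucc) :=
      he.comp _ (Fin.castSucc_injective ν)
    by_cases hl : c (Fin.last ν) = 0
    · have h0 : (fun j : Fin ν => c j.castSucc) = 0 := by
        apply ih _ he'
        intro i hi
        have := hc i (by omega)
        rw [Fin.sum_univ_castSucc, hl] at this
        simpa using this
      funext j
      refine Fin.lastCases hl (fun j => ?_) j
      exact congrFun h0 j
    · exfalso
      set d : Fin (ν + 1) → L := fun j => (c (Fin.last ν))⁻¹ * c j with hd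
      have hdl : d (Fin.last ν) = 1 := inv_mul_cancel₀ hl
      have hdc : ∀ i : ℕ, i < ν + 1 → ∑ j, d j * (σ ^ i) (e j) = 0 := by
        intro i hi
        simp only [hd, mul_assoc, ← Finset.mul_sum, hc i hi, mul_zero]
      have h0 : (fun j : Fin ν => d j.castSucc - σ.symm (d j.castSucc)) = 0 := by
        apply ih _ he'
        intro i hi
        have h1 := hdc i (by omega)
        have h2 := congrArg σ.symm (hdc (i + 1) (by omega))
        have h3 : ∀ x, σ.symm ((σ ^ (i + 1)) x) = (σ ^ i) x := by
          intro x
          rw [pow_succ', RingAut.mul_apply, RingEquiv.symm_apply_apply]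
        simp only [map_sum, map_mul, h3, map_zero] at h2
        rw [Fin.sum_univ_castSucc, hdl] at h1 h2
        rw [map_one] at h2
        simp only [sub_mul, Finset.sum_sub_distrib]
        linear_combination h1 - h2
      have hfix : ∀ j, d j ∈ σ.fixedSubfield := by
        intro j
        change σ (d j) = d j
        refine Fin.lastCases ?_ (fun j => ?_) j
        · rw [hdl, map_one]
        · have := sub_eq_zero.mp (congrFun h0 j)
          exact (RingEquiv.eq_symm_apply σ).mp this
      have h4 := Fintype.linearIndependent_iff.mp he (fun j => ⟨d j, hfix j⟩) (by
        simpa [Subfield.smul_def] using hdc 0 (by omega)) (Fin.last ν)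
      have h5 : d (Fin.last ν) = 0 := congrArg Subtype.val h4
      rw [hdl] at h5
      exact one_ne_zero h5

/-- Let `L` be a field, `σ` an automorphism of `L` of finite order `n`, and
`K = L^σ` the fixed subfield. If `e₁, …, e_ν ∈ L` (with `1 ≤ ν ≤ n`) are linearly independent
over `K`, then the `ν × ν` matrix with `(i,j)` entry `σ^i (e_j)` (for `0 ≤ i ≤ ν-1`) has
nonzero determinant. -/
theorem det_sigma_pow_ne_zero_of_linearIndependent
    {L : Type*} [Field L] (σ : L ≃+* L) (n : ℕ) (hn : 0 < n) (horder : orderOf σ = n)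
    (ν : ℕ) (hν1 : 1 ≤ ν) (hνn : ν ≤ n)
    (e : Fin ν → L) (he : LinearIndependent (σ.fixedSubfield) e) :
    (Matrix.of fun i j : Fin ν => (σ ^ (i : ℕ)) (e j)).det ≠ 0 := by
  intro hdet
  obtain ⟨c, hc0, hc⟩ := Matrix.exists_mulVec_eq_zero_iff.mpr hdet
  apply hc0
  apply sigma_relation_trivial σ ν e he
  intro i hi
  have := congrFun hc ⟨i, hi⟩
  simpa [Matrix.mulVec, dotProduct, mul_comm] using this

end
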